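/- arXiv:math/0403495 — 2 statements merged into one kernel-verified Lean document; each statement's English description precedes it below -/
import Mathlib

section
/- Let f : 𝖱^n → 𝖱 be continuous, I ⊆ N = {1,…,n}, and c, c' ∈ 𝖱^{N∖I}. Then the restriction of f to Δ_I(c) is unbounded if and only if the restriction of f to Δ_I(c') is unbounded. -/
noncomputable section
open Set

/-- The first uncountable ordinal `ω₁`. -/
def Omega1 : Ordinal := Ordinal.omega 1

/-- The closed long ray `𝖱`: `ω₁ × [0,1)` with the lexicographic order. -/
def LongRay : Type 1 := {o : Ordinal // o < Omega1} ×ₗ (Set.Ico (0:ℝ) 1)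

instance : LinearOrder LongRay :=
  inferInstanceAs (LinearOrder ({o : Ordinal // o < Omega1} ×ₗ (Set.Ico (0:ℝ) 1)))

/-- `𝖱` carries the order topology. -/
instance : TopologicalSpace LongRay := Preorder.topology LongRay
instance : OrderTopology LongRay := ⟨rfl⟩

lemma omega1_pos : (0 : Ordinal) < Omega1 := Ordinal.omega_pos 1

/-- The point `0 = (0,0)` of the long ray. -/
def rayZero : LongRay := toLex (⟨0, omega1_pos⟩, ⟨0, by simp⟩)

/-- Identification of the countable ordinal `o` with the point `(o,0)` of the long ray
(junk value for `o ≥ ω₁`). -/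
def ordR (o : Ordinal) : LongRay :=
  if h : o < Omega1 then toLex (⟨o, h⟩, ⟨0, by simp⟩) else rayZero

/-- The `I`-diagonal at height `c` (only the values of `c` off `I` are relevant). -/
def Delta (n : ℕ) (I : Finset (Fin n)) (c : Fin n → LongRay) : Set (Fin n → LongRay) :=
  {x | (∀ i ∈ I, ∀ i' ∈ I, x i = x i') ∧ ∀ j ∉ I, x j = c j}

/-- `f` is `I`-cofinal if `f` restricted to `Δ_I = Δ_I(0)` is unbounded. -/
def ICofinal (n : ℕ) (f : (Fin n → LongRay) → LongRay) (I : Finset (Fin n)) : Prop :=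
  ¬ BddAbove (f '' Delta n I (fun _ => rayZero))

/-- The cofinality class `𝔠(f) = {I : f is I-cofinal}`. -/
def cofClass (n : ℕ) (f : (Fin n → LongRay) → LongRay) : Set (Finset (Fin n)) :=
  {I | ICofinal n f I}

/-- `M_I(c) = {x : x_i ≥ c for all i ∈ I}`. -/
def MSet (n : ℕ) (I : Finset (Fin n)) (c : LongRay) : Set (Fin n → LongRay) :=
  {x | ∀ i ∈ I, c ≤ x i}

/-- `E_I(b,d) = {x ∈ M_I(d) : x_j = b_j for all j ∉ I}`. -/
def ESet (n : ℕ) (I : Finset (Fin n)) (b : Fin n → LongRay) (d : LongRay) :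
    Set (Fin n → LongRay) :=
  {x | (∀ i ∈ I, d ≤ x i) ∧ ∀ j ∉ I, x j = b j}

/-! Write `f` on `Δ_I(u)` as `r ↦ g (r, u)`, where `r` is the common value of the coordinates in
`I`. The set of heights `u` for which this map is bounded is clopen in the connected space `𝖱^n`.
It is closed because the bounds along a convergent sequence of heights have a common upper bound,
every countable subset of `𝖱` being bounded. It is open because its complement is the intersection
over `z` of the projections of the closed sets `{(r, u) | z ≤ g (r, u)}`, and projecting along the
sequentially compact space `𝖱` preserves closedness. -/

open Filter Topology TopologicalSpace

section ParametrizedBoundedness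

theorem isClosedMap_snd_of_seqCompactSpace {X Y : Type*} [TopologicalSpace X] [TopologicalSpace Y]
    [SeqCompactSpace X] [SequentialSpace Y] : IsClosedMap (Prod.snd : X × Y → Y) := by
  refine fun C hC => IsSeqClosed.isClosed fun y b hy hyb => ?_
  choose p hpC hpy using hy
  obtain ⟨a, φ, hφ, ha⟩ := SeqCompactSpace.tendsto_subseq fun k => (p k).1
  have hb : Tendsto (fun k => (p (φ k)).2) atTop (𝓝 b) := by
    simpa only [hpy, Function.comp_def] using hyb.comp hφ.tendsto_atTop
  exact ⟨(a, b), hC.mem_of_tendsto (ha.prodMk_nhds hb) (.of_forall fun k => hpC (φ k)), rfl⟩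

variable {R X Y : Type*} [TopologicalSpace X] [SequentialSpace X] [TopologicalSpace Y]

theorem isClosed_setOf_bddAbove_range [Preorder Y] [ClosedIicTopology Y]
    (hY : ∀ s : Set Y, s.Countable → BddAbove s) {g : R → X → Y} (hg : ∀ r, Continuous (g r)) :
    IsClosed {u | BddAbove (range fun r => g r u)} := by
  refine IsSeqClosed.isClosed fun v u hv hvu => ?_
  choose z hz using hv
  obtain ⟨y, hy⟩ := hY (range z) (countable_range z)
  refine ⟨y, forall_mem_range.2 fun r => ?_⟩
  have hlim : Tendsto (fun k => g r (v k)) atTop (𝓝 (g r u)) := ((hg r).tendsto u).comp hvu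
  exact le_of_tendsto' hlim fun k => (hz k (mem_range_self r)).trans (hy (mem_range_self k))

variable [TopologicalSpace R] [SeqCompactSpace R] [LinearOrder Y] [NoMaxOrder Y]

theorem isOpen_setOf_bddAbove_range [ClosedIciTopology Y] {g : R → X → Y}
    (hg : Continuous (Function.uncurry g)) : IsOpen {u | BddAbove (range fun r => g r u)} := by
  have hcompl : {u | BddAbove (range fun r => g r u)}ᶜ =
      ⋂ z, Prod.snd '' (Function.uncurry g ⁻¹' Ici z) := by
    ext u
    simp only [mem_compl_iff, mem_ofPred_eq, not_bddAbove_iff, exists_range_iff, mem_iInter]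
    constructor
    · intro h z
      obtain ⟨r, hr⟩ := h z
      exact ⟨(r, u), hr.le, rfl⟩
    · intro h z
      obtain ⟨z', hz'⟩ := exists_gt z
      obtain ⟨⟨r, _⟩, hr, rfl⟩ := h z'
      exact ⟨r, hz'.trans_le hr⟩
  rw [← isClosed_compl_iff, hcompl]
  exact isClosed_iInter fun z => isClosedMap_snd_of_seqCompactSpace _ (isClosed_Ici.preimage hg)

theorem bddAbove_range_iff_of_preconnectedSpace [PreconnectedSpace X] [OrderClosedTopology Y]
    (hY : ∀ s : Set Y, s.Countable → BddAbove s) {g : R → X → Y}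
    (hg : Continuous (Function.uncurry g)) (u v : X) :
    BddAbove (range fun r => g r u) ↔ BddAbove (range fun r => g r v) := by
  have hclopen : IsClopen {u | BddAbove (range fun r => g r u)} :=
    ⟨isClosed_setOf_bddAbove_range hY fun r => hg.comp (Continuous.prodMk_right r),
      isOpen_setOf_bddAbove_range hg⟩
  rcases isClopen_iff.1 hclopen with h | h
  · exact iff_of_false (eq_empty_iff_forall_notMem.1 h u) (eq_empty_iff_forall_notMem.1 h v)
  · exact iff_of_true (eq_univ_iff_forall.1 h u) (eq_univ_iff_forall.1 h v)

end ParametrizedBoundedness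

section OrderTopology

theorem seqCompactSpace_of_countable_bddAbove {R : Type*} [Preorder R] [OrderBot R]
    [TopologicalSpace R] [FirstCountableTopology R] [CompactIccSpace R]
    (hR : ∀ s : Set R, s.Countable → BddAbove s) : SeqCompactSpace R := by
  refine ⟨fun x _ => ?_⟩
  obtain ⟨y, hy⟩ := hR (range x) (countable_range x)
  obtain ⟨a, -, φ, hφ, ha⟩ := (isCompact_Icc (a := (⊥ : R)) (b := y)).isSeqCompact
    fun k => ⟨bot_le, hy (mem_range_self k)⟩
  exact ⟨a, mem_univ a, φ, hφ, ha⟩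

theorem isCountablyGenerated_iInf_principal_Ioi {α : Type*} [Preorder α] {D : Set α} {x : α}
    (hD : D.Countable) (hDx : ∀ a < x, ∃ d ∈ D, a ≤ d ∧ d < x) :
    (⨅ a ∈ Iio x, 𝓟 (Ioi a)).IsCountablyGenerated := by
  have hD_iInf : ⨅ a ∈ Iio x, 𝓟 (Ioi a) = ⨅ d : ↥(D ∩ Iio x), 𝓟 (Ioi d.1) := by
    rw [iInf_subtype']
    refine le_antisymm (le_iInf fun d => iInf_le_of_le ⟨d, d.2.2⟩ le_rfl) (le_iInf fun a => ?_)
    obtain ⟨d, hd, had, hdx⟩ := hDx a a.2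
    exact iInf_le_of_le ⟨d, hd, hdx⟩ (principal_mono.2 (Ioi_subset_Ioi had))
  have : Countable ↥(D ∩ Iio x) := (hD.mono inter_subset_left).to_subtype
  rw [hD_iInf]
  infer_instance

theorem isCountablyGenerated_nhds_of_countable {α : Type*} [Preorder α] [TopologicalSpace α]
    [OrderTopology α] {D : Set α} {x : α} (hD : D.Countable)
    (hlt : ∀ a < x, ∃ d ∈ D, a ≤ d ∧ d < x) (hgt : ∀ b > x, ∃ d ∈ D, x < d ∧ d ≤ b) :
    (𝓝 x).IsCountablyGenerated := by
  have hleft := isCountablyGenerated_iInf_principal_Ioi hD hlt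
  have hright : (⨅ b ∈ Ioi x, 𝓟 (Iio b)).IsCountablyGenerated :=
    isCountablyGenerated_iInf_principal_Ioi (α := αᵒᵈ) hD fun b hb => by
      obtain ⟨d, hd, hxd, hdb⟩ := hgt b hb
      exact ⟨d, hd, hdb, hxd⟩
  rw [nhds_eq_order]
  infer_instance

end OrderTopology

/-- A linear order with a least element in which every nonempty set has a greatest lower bound is
conditionally complete. The infimum of the empty set is, by convention, the least element. -/
abbrev conditionallyCompleteLinearOrderOfExistsIsGLB {α : Type*} [LinearOrder α] [OrderBot α]
    (h : ∀ s : Set α, s.Nonempty → ∃ m, IsGLB s m) : ConditionallyCompleteLinearOrder α where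
  __ := (inferInstance : LinearOrder α)
  __ :=
    letI : InfSet α := ⟨fun s => open Classical in if hs : s.Nonempty then (h s hs).choose else ⊥⟩
    conditionallyCompleteLatticeOfLatticeOfsInf α fun s _ hs => by
      rw [show sInf s = (h s hs).choose from dif_pos hs]
      exact (h s hs).choose_spec
  csSup_of_not_bddAbove s hs := by
    have huniv : (h univ univ_nonempty).choose = ⊥ :=
      le_bot_iff.1 ((h univ univ_nonempty).choose_spec.1 (mem_univ ⊥))
    have hempty : upperBounds s = ∅ := not_nonempty_iff_eq_empty.1 hs
    simp [sSup, hempty, huniv]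
  csInf_of_not_bddBelow s hs := absurd (OrderBot.bddBelow s) hs

section Lex

variable {α β : Type*}

theorem exists_isGLB_lex [LinearOrder α] [WellFoundedLT α] [Preorder β]
    (hβ : ∀ T : Set β, T.Nonempty → ∃ m, IsGLB T m) {S : Set (α ×ₗ β)} (hS : S.Nonempty) :
    ∃ m, IsGLB S m := by
  obtain ⟨_, ⟨p₀, hp₀, rfl⟩, hmin⟩ :=
    exists_minimal_of_wellFoundedLT (· ∈ (fun p : α ×ₗ β => (ofLex p).1) '' S) (hS.image _)
  have hfst_le : ∀ p ∈ S, (ofLex p₀).1 ≤ (ofLex p).1 := fun p hp =>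
    (le_total _ _).elim id (hmin (mem_image_of_mem _ hp))
  obtain ⟨m, hm⟩ := hβ {t | toLex ((ofLex p₀).1, t) ∈ S} ⟨(ofLex p₀).2, hp₀⟩
  refine ⟨toLex ((ofLex p₀).1, m), fun p hp => ?_, fun q hq => ?_⟩
  · refine Prod.Lex.le_iff'.2 ⟨hfst_le p hp, fun h => hm.1 ?_⟩
    change toLex ((ofLex p₀).1, (ofLex p).2) ∈ S
    rwa [show (ofLex p₀).1 = (ofLex p).1 from h]
  · refine Prod.Lex.le_iff'.2 ⟨(Prod.Lex.le_iff'.1 (hq hp₀)).1, fun h => hm.2 fun t ht => ?_⟩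
    exact (Prod.Lex.le_iff'.1 (hq ht)).2 h

theorem bddAbove_lex_of_bddAbove_image_fst [Preorder α] [NoMaxOrder α] [Preorder β] [Nonempty β]
    {S : Set (α ×ₗ β)} (hS : BddAbove ((fun p => (ofLex p).1) '' S)) : BddAbove S := by
  obtain ⟨a, ha⟩ := hS
  obtain ⟨b, hab⟩ := exists_gt a
  exact ⟨toLex (b, Classical.arbitrary β), fun p hp =>
    Prod.Lex.le_iff.2 (.inl ((ha (mem_image_of_mem _ hp)).trans_lt hab))⟩

variable [LinearOrder β] [DenselyOrdered β] [NoMaxOrder β] [TopologicalSpace β] [OrderTopology β]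

theorem exists_lex_between [Preorder α] {Q : Set β} (hQ : Dense Q) {p q : α ×ₗ β}
    (hpq : p < q) : ∃ t ∈ Q, p < toLex ((ofLex p).1, t) ∧ toLex ((ofLex p).1, t) < q := by
  rcases Prod.Lex.lt_iff.1 hpq with hfst | ⟨hfst, hsnd⟩
  · obtain ⟨t, ht, hpt⟩ := hQ.exists_gt (ofLex p).2
    exact ⟨t, ht, Prod.Lex.lt_iff.2 (.inr ⟨rfl, hpt⟩), Prod.Lex.lt_iff.2 (.inl hfst)⟩
  · obtain ⟨t, ht, hpt, htq⟩ := hQ.exists_between hsnd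
    exact ⟨t, ht, Prod.Lex.lt_iff.2 (.inr ⟨rfl, hpt⟩), Prod.Lex.lt_iff.2 (.inr ⟨hfst, htq⟩)⟩

theorem firstCountableTopology_lex [PartialOrder α] [TopologicalSpace (α ×ₗ β)]
    [OrderTopology (α ×ₗ β)] [SeparableSpace β] (hα : ∀ a : α, (Iic a).Countable) :
    FirstCountableTopology (α ×ₗ β) := by
  obtain ⟨Q, hQ_countable, hQ⟩ := exists_countable_dense β
  refine ⟨fun x => ?_⟩
  refine isCountablyGenerated_nhds_of_countable (D := toLex '' (Iic (ofLex x).1 ×ˢ Q))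
    (((hα _).prod hQ_countable).image _) (fun a ha => ?_) fun b hb => ?_
  · obtain ⟨t, ht, hat, htx⟩ := exists_lex_between hQ ha
    exact ⟨_, ⟨(_, t), ⟨(Prod.Lex.le_iff'.1 ha.le).1, ht⟩, rfl⟩, hat.le, htx⟩
  · obtain ⟨t, ht, hxt, htb⟩ := exists_lex_between hQ hb
    exact ⟨_, ⟨(_, t), ⟨le_rfl, ht⟩, rfl⟩, hxt, htb.le⟩

end Lex

section CountableOrdinals

theorem bddAbove_of_countable_of_lt_Omega1 {s : Set {o : Ordinal // o < Omega1}}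
    (hs : s.Countable) : BddAbove s := by
  have := hs.to_subtype
  exact ⟨⟨⨆ o : s, o.1.1, Ordinal.iSup_lt_omega_one fun o => o.1.2⟩, fun o ho =>
    Ordinal.le_iSup (fun o : s => o.1.1) ⟨o, ho⟩⟩

theorem countable_Iic_of_lt_Omega1 (a : {o : Ordinal // o < Omega1}) : (Iic a).Countable := by
  have hIio : (Iio (Order.succ a.1)).Countable := by
    rw [← Cardinal.le_aleph0_iff_set_countable, Cardinal.mk_Iio_ordinal, Cardinal.lift_le_aleph0,
      ← Order.lt_succ_iff, Cardinal.succ_aleph0]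
    exact Cardinal.lt_omega_iff_card_lt.1 ((Cardinal.isSuccLimit_omega 1).succ_lt a.2)
  rw [Order.Iio_succ] at hIio
  exact hIio.preimage Subtype.val_injective

instance : NoMaxOrder {o : Ordinal // o < Omega1} where
  exists_gt a := ⟨⟨Order.succ a.1, (Cardinal.isSuccLimit_omega 1).succ_lt a.2⟩, Order.lt_succ a.1⟩

end CountableOrdinals

namespace LongRay

instance : OrderBot LongRay where
  bot := rayZero
  bot_le x := Prod.Lex.le_iff'.2 ⟨zero_le (a := (ofLex x).1.1), fun _ => (ofLex x).2.2.1⟩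

instance : DenselyOrdered LongRay :=
  inferInstanceAs (DenselyOrdered ({o : Ordinal // o < Omega1} ×ₗ Ico (0 : ℝ) 1))

instance : NoMaxOrder LongRay :=
  inferInstanceAs (NoMaxOrder ({o : Ordinal // o < Omega1} ×ₗ Ico (0 : ℝ) 1))

instance : FirstCountableTopology LongRay :=
  letI : TopologicalSpace ({o : Ordinal // o < Omega1} ×ₗ Ico (0 : ℝ) 1) := Preorder.topology _
  haveI : OrderTopology ({o : Ordinal // o < Omega1} ×ₗ Ico (0 : ℝ) 1) := ⟨rfl⟩
  firstCountableTopology_lex (α := {o : Ordinal // o < Omega1}) (β := Ico (0 : ℝ) 1)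
    countable_Iic_of_lt_Omega1

theorem exists_isGLB {S : Set LongRay} (hS : S.Nonempty) : ∃ m, IsGLB S m := by
  let : Inhabited (Ico (0 : ℝ) 1) := ⟨⟨0, by simp⟩⟩
  exact exists_isGLB_lex (fun T hT => ⟨sInf T, isGLB_csInf hT ⟨default, fun t _ => t.2.1⟩⟩) hS

theorem bddAbove_of_countable {s : Set LongRay} (hs : s.Countable) : BddAbove s :=
  have : Nonempty (Ico (0 : ℝ) 1) := ⟨⟨0, by simp⟩⟩
  bddAbove_lex_of_bddAbove_image_fst (bddAbove_of_countable_of_lt_Omega1 (hs.image _))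

instance : PreconnectedSpace LongRay :=
  letI := conditionallyCompleteLinearOrderOfExistsIsGLB fun _ => exists_isGLB
  inferInstance

instance : CompactIccSpace LongRay :=
  letI := conditionallyCompleteLinearOrderOfExistsIsGLB fun _ => exists_isGLB
  ConditionallyCompleteLinearOrder.toCompactIccSpace LongRay

instance : SeqCompactSpace LongRay :=
  seqCompactSpace_of_countable_bddAbove fun _ => bddAbove_of_countable

end LongRay

theorem Delta_eq_range (n : ℕ) (I : Finset (Fin n)) (c : Fin n → LongRay) :
    Delta n I c = range fun x => I.piecewise (fun _ => x) c := by
  ext y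
  constructor
  · rintro ⟨hI, hc⟩
    obtain ⟨x, hx⟩ : ∃ x, ∀ i ∈ I, x = y i := by
      rcases I.eq_empty_or_nonempty with rfl | ⟨i₀, hi₀⟩
      · exact ⟨⊥, by simp⟩
      · exact ⟨y i₀, hI i₀ hi₀⟩
    refine ⟨x, funext fun i => ?_⟩
    by_cases hi : i ∈ I
    · simp [hi, hx i hi]
    · simp [hi, hc i hi]
  · rintro ⟨x, rfl⟩
    exact ⟨fun i hi i' hi' => by simp [hi, hi'], fun j hj => by simp [hj]⟩

theorem continuous_uncurry_piecewise_const {ι X : Type*} [DecidableEq ι] [TopologicalSpace X]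
    (I : Finset ι) :
    Continuous (Function.uncurry fun (x : X) (c : ι → X) => I.piecewise (fun _ => x) c) := by
  refine continuous_pi fun i => ?_
  by_cases hi : i ∈ I
  · simpa only [Function.uncurry_def, Finset.piecewise_eq_of_mem _ _ _ hi] using continuous_fst
  · simpa only [Function.uncurry_def, Finset.piecewise_eq_of_notMem _ _ _ hi] using by fun_prop

theorem unbounded_on_diagonal_indep_of_height_general {Y : Type*} [LinearOrder Y] [NoMaxOrder Y]
    [TopologicalSpace Y] [OrderClosedTopology Y] (hY : ∀ s : Set Y, s.Countable → BddAbove s)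
    (n : ℕ) (f : (Fin n → LongRay) → Y) (hf : Continuous f) (I : Finset (Fin n))
    (c c' : Fin n → LongRay) :
    ¬ BddAbove (f '' Delta n I c) ↔ ¬ BddAbove (f '' Delta n I c') := by
  simp only [Delta_eq_range, ← range_comp]
  exact not_congr (bddAbove_range_iff_of_preconnectedSpace hY
    (g := fun x c => f (I.piecewise (fun _ => x) c))
    (hf.comp (continuous_uncurry_piecewise_const I)) c c')

/-- `f` restricted to `Δ_I(c)` is unbounded iff `f` restricted to
`Δ_I(c')` is unbounded. -/
theorem unbounded_on_diagonal_indep_of_height (n : ℕ) (f : (Fin n → LongRay) → LongRay)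
    (hf : Continuous f) (I : Finset (Fin n)) (c c' : Fin n → LongRay) :
    ¬ BddAbove (f '' Delta n I c) ↔ ¬ BddAbove (f '' Delta n I c') :=
  unbounded_on_diagonal_indep_of_height_general (fun _ => LongRay.bddAbove_of_countable)
    n f hf I c c'
end
end

section
/- The set [𝖱^n, 𝖱] of free homotopy classes of continuous maps 𝖱^n → 𝖱 is in bijection with the set of antichains of 𝒫(N)∖{∅} ordered by inclusion, where N = {1,…,n} (the empty antichain being included). -/
noncomputable section
open Set

/-!
A map `f` is `I`-cofinal when it is unbounded along the `I`-diagonals. As any countably many bounds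
on the long ray have a common bound, boundedness is a clopen condition on the parameter of a
continuous family, so the cofinality class of `f` is a homotopy invariant. It is an upper set not
containing `∅`, hence is determined by its minimal elements, and every antichain arises from a
maximum of minima of coordinates.

Conversely, a diagonal intersection argument yields a cofinal set of levels `c` such that the side
of `c` on which `f x` lies is decided by the cofinality class of `f` and the set `{i | c ≤ x i}`.
If `f` and `g` have the same class, their common levels never separate `f x` from `g x`. The two
values can then be joined inside an initial segment below a common level, which embeds in `ℝ`.
-/

open Filter Topology

section CountableCofinality

lemma bddAbove_range_of_countable {ι : Sort*} {L : Type*} [Countable ι] [Preorder L] [Nonempty L]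
    [IsDirectedOrder L] [CountableInterFilter (atTop : Filter L)] (u : ι → L) :
    BddAbove (range u) :=
  let ⟨b, hb⟩ := (eventually_countable_forall.2 fun i => eventually_ge_atTop (u i)).exists
  ⟨b, forall_mem_range.2 hb⟩

lemma countableInterFilter_atTop_of_bddAbove_range {L : Type*} [Preorder L] [Nonempty L]
    [IsDirectedOrder L] (h : ∀ u : ℕ → L, BddAbove (range u)) :
    CountableInterFilter (atTop : Filter L) := by
  refine ⟨fun S hS hmem => ?_⟩
  rcases S.eq_empty_or_nonempty with rfl | hne
  · simp
  obtain ⟨s, rfl⟩ := hS.exists_eq_range hne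
  choose a ha using fun k => mem_atTop_sets.1 (hmem (s k) (mem_range_self k))
  obtain ⟨b, hb⟩ := h a
  refine mem_atTop_sets.2 ⟨b, fun c hc => ?_⟩
  rintro _ ⟨k, rfl⟩
  exact ha k c ((hb (mem_range_self k)).trans hc)

variable {L : Type*} [LinearOrder L] [TopologicalSpace L] [OrderTopology L] [CompactIccSpace L]

lemma exists_tendsto_of_monotone_of_bddAbove {u : ℕ → L} (hu : Monotone u)
    (hb : BddAbove (range u)) : ∃ ξ, Tendsto u atTop (𝓝 ξ) := by
  obtain ⟨b, hb⟩ := hb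
  have hK : IsCompact (closure (range u)) := isCompact_Icc.closure_of_subset
    (range_subset_iff.2 fun k => ⟨hu k.zero_le, hb (mem_range_self k)⟩ : range u ⊆ Icc (u 0) b)
  obtain ⟨ξ, hξ⟩ := hK.exists_isLUB (range_nonempty u).closure
  exact ⟨ξ, tendsto_atTop_isLUB hu ((isLUB_iff_of_subset_of_subset_closure
    subset_closure subset_rfl).2 hξ.2)⟩

variable [CountableInterFilter (atTop : Filter L)]

lemma exists_seq_tendsto_of_frequently {r : L → L → Prop} (hr : ∀ a, ∃ᶠ b in atTop, r a b)
    (a : L) : ∃ (z : ℕ → L) (ξ : L), (∀ k, r (z k) (z (k + 1))) ∧ Monotone z ∧ z 0 = a ∧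
      Tendsto z atTop (𝓝 ξ) := by
  have : Nonempty L := ⟨a⟩
  choose s hs hrs using fun a => frequently_atTop.1 (hr a) a
  let z : ℕ → L := fun k => s^[k] a
  have hz (k) : z (k + 1) = s (z k) := Function.iterate_succ_apply' s k a
  have hmono : Monotone z := monotone_nat_of_le_succ fun k => (hs (z k)).trans_eq (hz k).symm
  obtain ⟨ξ, hξ⟩ := exists_tendsto_of_monotone_of_bddAbove hmono (bddAbove_range_of_countable z)
  exact ⟨z, ξ, fun k => hz k ▸ hrs (z k), hmono, rfl, hξ⟩

lemma frequently_mem_inter_of_isClosed {A B : Set L} (hA : IsClosed A) (hB : IsClosed B)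
    (hA' : ∃ᶠ x in atTop, x ∈ A) (hB' : ∃ᶠ x in atTop, x ∈ B) : ∃ᶠ x in atTop, x ∈ A ∩ B := by
  have : Nonempty L := hA'.exists.nonempty
  refine frequently_atTop.2 fun a => ?_
  obtain ⟨z, ξ, hz, hmono, rfl, hξ⟩ := exists_seq_tendsto_of_frequently
    (r := fun a b => b ∈ B ∧ ∃ y ∈ A, a ≤ y ∧ y ≤ b) (fun a => by
      obtain ⟨y, hay, hy⟩ := frequently_atTop.1 hA' a
      exact (hB'.and_eventually (eventually_ge_atTop y)).mono fun b hb =>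
        ⟨hb.1, y, hy, hay, hb.2⟩) a
  choose hzB y hyA hzy hyz using hz
  have hξ' := (tendsto_add_atTop_iff_nat 1).2 hξ
  exact ⟨ξ, hmono.ge_of_tendsto hξ 0,
    hA.mem_of_tendsto (tendsto_of_tendsto_of_tendsto_of_le_of_le hξ hξ' hzy hyz)
      (Eventually.of_forall hyA),
    hB.mem_of_tendsto hξ' (Eventually.of_forall hzB)⟩

lemma frequently_atTop_forall_lt [Nonempty L] {P : L → L → Prop} (hP : ∀ b, ∀ᶠ c in atTop, P b c)
    (hanti : ∀ ⦃a b c⦄, a ≤ b → P b c → P a c) : ∃ᶠ c in atTop, ∀ b < c, P b c := by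
  refine frequently_atTop.2 fun a => ?_
  obtain ⟨z, ξ, hz, hmono, rfl, hξ⟩ := exists_seq_tendsto_of_frequently
    (r := fun a b => ∀ c ≥ b, P a c)
    (fun a => (eventually_atTop.2 ((eventually_atTop.1 (hP a)).imp fun b hb c hc d hd =>
      hb d (hc.trans hd))).frequently) a
  refine ⟨ξ, hmono.ge_of_tendsto hξ 0, fun b hb => ?_⟩
  obtain ⟨k, hk⟩ := (hξ.eventually (lt_mem_nhds hb)).exists
  exact hanti hk.le (hz k ξ (hmono.ge_of_tendsto hξ (k + 1)))

section Maps

variable {M : Type*} [LinearOrder M] [TopologicalSpace M] [OrderClosedTopology M] [NoMaxOrder M]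

lemma tendsto_atTop_of_not_bddAbove_range [OrderBot L] {h : L → M} (hc : Continuous h)
    (hu : ¬ BddAbove (range h)) : Tendsto h atTop atTop := by
  have : Nonempty M := ⟨h ⊥⟩
  refine tendsto_atTop.2 fun γ => ?_
  by_contra hγ
  obtain ⟨γ', hγγ'⟩ := exists_gt γ
  have hlow : ∃ᶠ x in atTop, h x ≤ γ := (not_eventually.1 hγ).mono fun x hx => (not_le.1 hx).le
  have hhigh : ∃ᶠ x in atTop, γ' ≤ h x := by
    refine frequently_atTop.2 fun z => ?_
    by_contra! hz
    obtain ⟨m, hm⟩ := (isCompact_Icc (a := ⊥) (b := z)).bddAbove_image hc.continuousOn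
    refine hu ⟨max m γ', forall_mem_range.2 fun x => ?_⟩
    rcases le_total x z with hxz | hzx
    · exact le_max_of_le_left (hm ⟨x, ⟨bot_le, hxz⟩, rfl⟩)
    · exact le_max_of_le_right (hz x hzx).le
  obtain ⟨x, hx, hx'⟩ := (frequently_mem_inter_of_isClosed (isClosed_le hc continuous_const)
    (isClosed_le continuous_const hc) hlow hhigh).exists
  exact hγγ'.not_ge (hx'.trans hx)

variable {T : Type*} [TopologicalSpace T] {F : T → L → M} [OrderBot L]

lemma eventually_forall_ge_of_forall_not_bddAbove_range [TopologicalSpace.SeparableSpace T]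
    (hF : ∀ t, Continuous (F t)) (hF' : ∀ x, Continuous (F · x))
    (hb : ∀ t, ¬ BddAbove (range (F t))) (γ : M) : ∀ᶠ x in atTop, ∀ t, γ ≤ F t x := by
  obtain ⟨D, hD, hDd⟩ := TopologicalSpace.exists_countable_dense T
  have hDγ : ∀ᶠ x in atTop, ∀ t ∈ D, γ ≤ F t x := (eventually_countable_ball hD).2 fun t _ =>
    (tendsto_atTop_of_not_bddAbove_range (hF t) (hb t)).eventually_ge_atTop γ
  exact hDγ.mono fun x hx => isClosed_property hDd.denseRange_val
    (isClosed_le continuous_const (hF' x)) (Subtype.forall.2 hx)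

lemma bddAbove_range_of_preconnectedSpace [CountableInterFilter (atTop : Filter M)]
    [PreconnectedSpace T] [SequentialSpace T]
    (hF : ∀ t, Continuous (F t)) (hF' : ∀ x, Continuous (F · x)) {s : T}
    (hs : BddAbove (range (F s))) (t : T) : BddAbove (range (F t)) := by
  have : Nonempty M := ⟨F s ⊥⟩
  suffices h : IsClopen {t | BddAbove (range (F t))} from (h.eq_univ ⟨s, hs⟩).ge (mem_univ t)
  refine ⟨IsSeqClosed.isClosed fun u t hu hut => ?_,
    isClosed_compl_iff.1 (IsSeqClosed.isClosed fun u t hu hut => ?_)⟩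
  · choose m hm using hu
    obtain ⟨γ, hγ⟩ := bddAbove_range_of_countable m
    refine ⟨γ, forall_mem_range.2 fun x => ?_⟩
    exact le_of_tendsto (((hF' x).tendsto t).comp hut)
      (Eventually.of_forall fun k => (hm k ⟨x, rfl⟩).trans (hγ ⟨k, rfl⟩))
  · rintro ⟨γ, hγ⟩
    obtain ⟨γ', hγγ'⟩ := exists_gt γ
    obtain ⟨x, hx⟩ := (eventually_countable_forall.2 fun k =>
      (tendsto_atTop_of_not_bddAbove_range (hF (u k)) (hu k)).eventually_ge_atTop γ').exists
    have hγ'x : γ' ≤ F t x :=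
      ge_of_tendsto (((hF' x).tendsto t).comp hut) (Eventually.of_forall hx)
    exact hγγ'.not_ge (hγ'x.trans (hγ ⟨x, rfl⟩))

end Maps

end CountableCofinality

lemma exists_forall_le_of_forall_bddAbove_range {T X M : Type*} [TopologicalSpace T]
    [TopologicalSpace.SeparableSpace T] [LinearOrder M] [TopologicalSpace M]
    [OrderClosedTopology M] [Nonempty M] [CountableInterFilter (atTop : Filter M)]
    {F : T → X → M} (hF' : ∀ x, Continuous (F · x)) (hb : ∀ t, BddAbove (range (F t))) :
    ∃ γ, ∀ t x, F t x ≤ γ := by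
  obtain ⟨D, hD, hDd⟩ := TopologicalSpace.exists_countable_dense T
  have := hD.to_subtype
  choose m hm using hb
  obtain ⟨γ, hγ⟩ := bddAbove_range_of_countable fun t : D => m t
  refine ⟨γ, fun t x => ?_⟩
  exact isClosed_property hDd.denseRange_val (isClosed_le (hF' x) continuous_const)
    (fun s => (hm s ⟨x, rfl⟩).trans (hγ ⟨s, rfl⟩)) t

section WellOrderedWeights

lemma exists_summable_pos_of_countable {α : Type*} {s : Set α} (hs : s.Countable) :
    ∃ w : α → ℝ, Summable w ∧ 0 ≤ w ∧ ∀ a ∈ s, 0 < w a := by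
  obtain ⟨v, hv, c, hc, -⟩ := hs.exists_pos_hasSum_le one_pos
  exact ⟨s.indicator v, summable_subtype_iff_indicator.1 hc.summable,
    indicator_nonneg fun a _ => (hv a).le, fun a ha => by simpa [ha] using hv a⟩

variable {α : Type*} [LinearOrder α] {w : α → ℝ}

lemma tsum_indicator_Iic (hs : Summable w) (a : α) :
    ∑' i, (Iic a).indicator w i = (∑' i, (Iio a).indicator w i) + w a := by
  have hwa : w a = ∑' i, ({a} : Set α).indicator w i := by
    rw [← tsum_subtype, tsum_singleton a w]
  rw [hwa, ← (hs.indicator _).tsum_add (hs.indicator _), ← Iio_union_right,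
    indicator_union_of_disjoint (by simp)]

lemma tsum_indicator_Iio_le (hs : Summable w) (hw : 0 ≤ w) {a : α} {r : ℝ} (hr : 0 ≤ r)
    (h : ∀ c < a, ∑' i, (Iic c).indicator w i ≤ r) : ∑' i, (Iio a).indicator w i ≤ r := by
  refine (hs.indicator _).tsum_le_of_sum_le fun s => ?_
  simp only [indicator_apply, ← Finset.sum_filter, mem_Iio]
  rcases {i ∈ s | i < a}.eq_empty_or_nonempty with hempty | hne
  · simpa only [hempty, Finset.sum_empty] using hr
  set c := {i ∈ s | i < a}.max' hne
  have hca : c < a := (Finset.mem_filter.1 (Finset.max'_mem _ hne)).2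
  calc ∑ i ∈ s with i < a, w i
      = ∑ i ∈ s with i < a, (Iic c).indicator w i :=
        Finset.sum_congr rfl fun i hi =>
          (indicator_of_mem (mem_Iic.2 (Finset.le_max' _ i hi)) w).symm
    _ ≤ ∑' i, (Iic c).indicator w i :=
        (hs.indicator _).sum_le_tsum _ fun i _ => indicator_nonneg (fun j _ => hw j) i
    _ ≤ r := h c hca

lemma exists_tsum_Iio_le_lt_tsum_Iic [WellFoundedLT α] (hs : Summable w) (hw : 0 ≤ w) {r : ℝ}
    (hr : 0 ≤ r) {b : α} (hb : r < ∑' i, (Iic b).indicator w i) :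
    ∃ a, ∑' i, (Iio a).indicator w i ≤ r ∧ r < ∑' i, (Iic a).indicator w i := by
  obtain ⟨a, ha, hmin⟩ := WellFounded.has_min wellFounded_lt
    {a | r < ∑' i, (Iic a).indicator w i} ⟨b, hb⟩
  exact ⟨a, tsum_indicator_Iio_le hs hw hr fun c hc => not_lt.1 fun hrc => hmin c hrc hc, ha⟩

/-- The primitive of the weights `w`, increasing linearly by `w a` along the unit interval at `a`.
For summable weights it is the real coordinate that identifies initial segments with intervals. -/
def lexPrimitive (w : α → ℝ) (x : α ×ₗ Ico (0 : ℝ) 1) : ℝ :=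
  (∑' i, (Iio (ofLex x).1).indicator w i) + (ofLex x).2 * w (ofLex x).1

lemma lexPrimitive_nonneg (hw : 0 ≤ w) (x : α ×ₗ Ico (0 : ℝ) 1) : 0 ≤ lexPrimitive w x :=
  add_nonneg (tsum_nonneg fun i => indicator_nonneg (fun j _ => hw j) i)
    (mul_nonneg (ofLex x).2.2.1 (hw _))

lemma lexPrimitive_lt_lexPrimitive (hs : Summable w) (hw : 0 ≤ w) {x y : α ×ₗ Ico (0 : ℝ) 1}
    (hx : 0 < w (ofLex x).1) (hxy : x < y) : lexPrimitive w x < lexPrimitive w y := by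
  rcases Prod.Lex.lt_iff.1 hxy with h | ⟨h, h'⟩
  · calc lexPrimitive w x
        < (∑' i, (Iio (ofLex x).1).indicator w i) + w (ofLex x).1 :=
          add_lt_add_right ((mul_lt_iff_lt_one_left hx).2 (ofLex x).2.2.2) _
      _ = ∑' i, (Iic (ofLex x).1).indicator w i := (tsum_indicator_Iic hs _).symm
      _ ≤ ∑' i, (Iio (ofLex y).1).indicator w i :=
          (hs.indicator _).tsum_le_tsum
            (indicator_le_indicator_of_subset (Iic_subset_Iio.2 h) hw) (hs.indicator _)
      _ ≤ lexPrimitive w y := le_add_of_nonneg_right (mul_nonneg (ofLex y).2.2.1 (hw _))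
  · unfold lexPrimitive
    rw [← h]
    gcongr

lemma exists_lexPrimitive_eq [WellFoundedLT α] (hs : Summable w) (hw : 0 ≤ w)
    {b : α ×ₗ Ico (0 : ℝ) 1} {r : ℝ} (hr : 0 ≤ r) (hrb : r < lexPrimitive w b) :
    ∃ x, lexPrimitive w x = r := by
  have hb : r < ∑' i, (Iic (ofLex b).1).indicator w i := by
    rw [tsum_indicator_Iic hs]
    exact hrb.trans_le (add_le_add_right
      (mul_le_of_le_one_left (hw _) (ofLex b).2.2.2.le) _)
  obtain ⟨a, har, hra⟩ := exists_tsum_Iio_le_lt_tsum_Iic hs hw hr hb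
  rw [tsum_indicator_Iic hs] at hra
  have hwa : 0 < w a := by linarith
  refine ⟨toLex (a, ⟨(r - ∑' i, (Iio a).indicator w i) / w a,
    div_nonneg (sub_nonneg.2 har) hwa.le, (div_lt_one hwa).2 (by linarith)⟩), ?_⟩
  simp only [lexPrimitive, ofLex_toLex]
  field_simp
  ring

theorem exists_orderIso_Iic_Icc_of_countable [WellFoundedLT α] (b : α ×ₗ Ico (0 : ℝ) 1)
    (hb : (Iic (ofLex b).1).Countable) :
    ∃ r ≥ 0, Nonempty (Iic b ≃o Icc (0 : ℝ) r) := by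
  obtain ⟨w, hs, hw, hpos⟩ := exists_summable_pos_of_countable hb
  have hposIic {x : α ×ₗ Ico (0 : ℝ) 1} (hx : x ≤ b) : 0 < w (ofLex x).1 :=
    hpos _ (Prod.Lex.monotone_fst _ _ hx)
  have hmono : StrictMonoOn (lexPrimitive w) (Iic b) := fun x hx y _ hxy =>
    lexPrimitive_lt_lexPrimitive hs hw (hposIic hx) hxy
  have himage : lexPrimitive w '' Iic b = Icc 0 (lexPrimitive w b) := by
    refine Subset.antisymm (image_subset_iff.2 fun x hx =>
      ⟨lexPrimitive_nonneg hw x, hmono.monotoneOn hx self_mem_Iic hx⟩) fun r ⟨hr, hrb⟩ => ?_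
    rcases hrb.eq_or_lt with rfl | hrb
    · exact mem_image_of_mem _ self_mem_Iic
    obtain ⟨x, rfl⟩ := exists_lexPrimitive_eq hs hw hr hrb
    refine mem_image_of_mem _ (mem_Iic.2 (not_lt.1 fun hbx => hrb.not_gt ?_))
    exact lexPrimitive_lt_lexPrimitive hs hw (hposIic le_rfl) hbx
  exact ⟨lexPrimitive w b, lexPrimitive_nonneg hw b,
    ⟨(hmono.orderIso _ _).trans (OrderIso.setCongr _ _ himage)⟩⟩

end WellOrderedWeights

section Intervals

variable {X L : Type*} [TopologicalSpace X] [LinearOrder L] [TopologicalSpace L] {f g : X → L}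

lemma continuous_of_forall_mem_uIcc [OrderTopology L] {H : X → L} (hf : Continuous f)
    (hg : Continuous g) (hH : ∀ x, H x ∈ uIcc (f x) (g x))
    (hne : ∀ x, f x ≠ g x → ContinuousAt H x) : Continuous H := by
  refine continuous_iff_continuousAt.2 fun x => ?_
  by_cases hx : f x = g x
  · have hHx : H x = f x := by simpa [← hx] using hH x
    refine tendsto_of_tendsto_of_tendsto_of_le_of_le (g := fun y => min (f y) (g y))
      (h := fun y => max (f y) (g y)) ?_ ?_ (fun y => (hH y).1) fun y => (hH y).2
    · simpa only [hHx, ← hx, min_self] using (hf.min hg).tendsto x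
    · simpa only [hHx, ← hx, max_self] using (hf.max hg).tendsto x
  · exact hne x hx

lemma eventually_sep_max_le_eq [OrderClosedTopology L] [DenselyOrdered L] {C : Set L}
    (hf : Continuous f) (hg : Continuous g) (hC : ∀ c ∈ C, ∀ x, c ∉ uIoo (f x) (g x)) {x : X}
    (hx : f x ≠ g x) :
    ∀ᶠ y in 𝓝 x, {c ∈ C | max (f y) (g y) ≤ c} = {c ∈ C | max (f x) (g x) ≤ c} := by
  obtain ⟨w, hw⟩ : (uIoo (f x) (g x)).Nonempty := nonempty_Ioo.2 (min_lt_max.2 hx)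
  have hsep {y : X} (hy : w ∈ uIoo (f y) (g y)) :
      {c ∈ C | max (f y) (g y) ≤ c} = {c ∈ C | w < c} := by
    refine sep_ext_iff.2 fun c hc => ⟨hy.2.trans_le, fun hwc => ?_⟩
    exact not_lt.1 fun hcy => hC c hc y ⟨hy.1.trans hwc, hcy⟩
  have hwy : ∀ᶠ y in 𝓝 x, w ∈ uIoo (f y) (g y) :=
    ((hf.min hg).tendsto x |>.eventually_lt_const hw.1).and
      ((hf.max hg).tendsto x |>.eventually_const_lt hw.2)
  exact hwy.mono fun y hy => (hsep hy).trans (hsep hw).symm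

end Intervals

section Tubes

variable {ι L M : Type*} [DecidableEq ι]

/-- The point of the `I`-diagonal `Δ_I(c)` at height `x`. -/
def diagPoint (I : Finset ι) (c : ι → L) (x : L) : ι → L :=
  I.piecewise (fun _ => x) c

lemma diagPoint_of_mem {I : Finset ι} {i : ι} (hi : i ∈ I) (c : ι → L) (x : L) :
    diagPoint I c x i = x :=
  I.piecewise_eq_of_mem _ _ hi

lemma diagPoint_of_notMem {I : Finset ι} {i : ι} (hi : i ∉ I) (c : ι → L) (x : L) :
    diagPoint I c x i = c i :=
  I.piecewise_eq_of_notMem _ _ hi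

@[fun_prop]
lemma continuous_diagPoint {X : Type*} [TopologicalSpace X] [TopologicalSpace L] (I : Finset ι)
    {c : X → ι → L} {x : X → L} (hc : Continuous c) (hx : Continuous x) :
    Continuous fun p => diagPoint I (c p) (x p) :=
  continuous_pi fun i => by
    by_cases hi : i ∈ I
    · simpa only [diagPoint_of_mem hi] using hx
    · simpa only [diagPoint_of_notMem hi] using continuous_pi_iff.1 hc i

/-- The points near the end of the `I`-diagonals: the coordinates in `I` are at least `δ`, the
others at most `β`. -/
def tube [LE L] (I : Finset ι) (β δ : L) : Set (ι → L) :=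
  {x | (∀ i ∈ I, δ ≤ x i) ∧ ∀ j ∉ I, x j ≤ β}

variable [LinearOrder L] [OrderBot L] [TopologicalSpace L] [OrderTopology L] [CompactIccSpace L]
  [CountableInterFilter (atTop : Filter L)]

lemma frequently_exists_diagPoint_mem [Finite ι] {A : Set (ι → L)} (hA : IsClosed A)
    {I : Finset ι} {β : L} (h : ∃ᶠ δ in atTop, (A ∩ tube I β δ).Nonempty) :
    ∃ᶠ ξ in atTop, ∃ b : ι → Iic β, diagPoint I (fun j => (b j : L)) ξ ∈ A := by
  refine frequently_atTop.2 fun a => ?_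
  obtain ⟨z, ξ, hz, hmono, rfl, hξ⟩ := exists_seq_tendsto_of_frequently
    (r := fun a b => ∃ x ∈ A ∩ tube I β a, ∀ i, x i ≤ b) (fun a => by
      obtain ⟨δ, haδ, x, hxA, hx⟩ := frequently_atTop.1 h a
      exact ((eventually_all.2 fun i => eventually_ge_atTop (x i)).mono fun b hb =>
        ⟨x, ⟨hxA, fun i hi => haδ.trans (hx.1 i hi), hx.2⟩, hb⟩).frequently) a
  choose x hx hxz using hz
  have hzξ (k) : z k ≤ ξ := hmono.ge_of_tendsto hξ k
  let l : Filter ℕ := hyperfilter ℕ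
  have hl : l ≤ atTop := Nat.hyperfilter_le_atTop
  obtain ⟨p, -, hp⟩ : ∃ p ∈ Icc ⊥ fun _ => ξ, Tendsto x l (𝓝 p) :=
    isCompact_Icc.ultrafilter_le_nhds ((hyperfilter ℕ).map x) (le_principal_iff.2
      (Eventually.of_forall (f := l) fun k => ⟨bot_le, fun i => (hxz k i).trans (hzξ _)⟩))
  have hpi := tendsto_pi_nhds.1 hp
  have hpI (i) (hi : i ∈ I) : p i = ξ := tendsto_nhds_unique (hpi i) <|
    (tendsto_of_tendsto_of_tendsto_of_le_of_le hξ ((tendsto_add_atTop_iff_nat 1).2 hξ)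
      (fun k => (hx k).2.1 i hi) fun k => hxz k i).mono_left hl
  have hpβ (j) (hj : j ∉ I) : p j ≤ β :=
    le_of_tendsto (hpi j) (Eventually.of_forall fun k => (hx k).2.2 j hj)
  refine ⟨ξ, hzξ 0, fun j => projIic β (p j), ?_⟩
  convert hA.mem_of_tendsto hp (Eventually.of_forall fun k => (hx k).1) using 1
  funext i
  by_cases hi : i ∈ I
  · rw [diagPoint_of_mem hi, hpI i hi]
  · rw [diagPoint_of_notMem hi, coe_projIic, min_eq_right (hpβ i hi)]

variable [Finite ι] [LinearOrder M] [TopologicalSpace M] [OrderClosedTopology M] [NoMaxOrder M]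
  [CountableInterFilter (atTop : Filter M)]
  [∀ b : L, PreconnectedSpace (Iic b)] [∀ b : L, SecondCountableTopology (Iic b)]
  {f : (ι → L) → M} {I : Finset ι} {c : ι → L}

lemma bddAbove_range_diagPoint (hf : Continuous f)
    (hI : BddAbove (range fun x => f (diagPoint I c x))) (c' : ι → L) :
    BddAbove (range fun x => f (diagPoint I c' x)) := by
  obtain ⟨β, hβ⟩ := (eventually_all.2 fun j =>
    (eventually_ge_atTop (c j)).and (eventually_ge_atTop (c' j))).exists
  exact bddAbove_range_of_preconnectedSpace
    (F := fun (b : ι → Iic β) x => f (diagPoint I (fun j => (b j : L)) x))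
    (fun b => by fun_prop) (fun x => by fun_prop) (s := fun j => ⟨c j, (hβ j).1⟩) hI
    fun j => ⟨c' j, (hβ j).2⟩

lemma eventually_forall_mem_tube_ge (hf : Continuous f)
    (hI : ¬ BddAbove (range fun x => f (diagPoint I c x))) (β : L) (γ : M) :
    ∀ᶠ δ in atTop, ∀ x ∈ tube I β δ, γ ≤ f x := by
  obtain ⟨γ', hγγ'⟩ := exists_gt γ
  have hdiag : ∀ᶠ ξ in atTop, ∀ b : ι → Iic β, γ' ≤ f (diagPoint I (fun j => (b j : L)) ξ) :=
    eventually_forall_ge_of_forall_not_bddAbove_range (fun b => by fun_prop)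
      (fun x => by fun_prop) (fun b hb => hI (bddAbove_range_diagPoint hf hb c)) γ'
  by_contra hcon
  have hA : ∃ᶠ δ in atTop, ({x | f x ≤ γ} ∩ tube I β δ).Nonempty :=
    (not_eventually.1 hcon).mono fun δ hδ => by
      push Not at hδ
      exact hδ.imp fun x hx => ⟨hx.2.le, hx.1⟩
  obtain ⟨ξ, ⟨b, hb⟩, hξ⟩ := ((frequently_exists_diagPoint_mem
    (isClosed_le hf continuous_const) hA).and_eventually hdiag).exists
  exact hγγ'.not_ge ((hξ b).trans hb)

lemma exists_eventually_forall_mem_tube_le (hf : Continuous f)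
    (hI : BddAbove (range fun x => f (diagPoint I c x))) (β : L) :
    ∃ m, ∀ᶠ δ in atTop, ∀ x ∈ tube I β δ, f x ≤ m := by
  have : Nonempty M := ⟨f c⟩
  obtain ⟨γ, hγ⟩ := exists_forall_le_of_forall_bddAbove_range
    (F := fun (b : ι → Iic β) x => f (diagPoint I (fun j => (b j : L)) x))
    (fun x => by fun_prop) fun b => bddAbove_range_diagPoint hf hI _
  obtain ⟨γ', hγγ'⟩ := exists_gt γ
  refine ⟨γ', ?_⟩
  by_contra hcon
  have hA : ∃ᶠ δ in atTop, ({x | γ' ≤ f x} ∩ tube I β δ).Nonempty :=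
    (not_eventually.1 hcon).mono fun δ hδ => by
      push Not at hδ
      exact hδ.imp fun x hx => ⟨hx.2.le, hx.1⟩
  obtain ⟨ξ, b, hb⟩ :=
    (frequently_exists_diagPoint_mem (isClosed_le continuous_const hf) hA).exists
  exact hγγ'.not_ge (le_trans hb (hγ b ξ))

end Tubes

lemma coe_upperClosure_setOf_minimal {α : Type*} [PartialOrder α] [Finite α] {s : Set α}
    (hs : IsUpperSet s) : (upperClosure {a | Minimal (· ∈ s) a} : Set α) = s := by
  ext a
  refine ⟨fun ⟨b, hb, hba⟩ => hs hba hb.prop, fun ha => ?_⟩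
  obtain ⟨b, hba, hb⟩ := s.toFinite.exists_le_minimal ha
  exact ⟨b, hb, hba⟩

section MaxMin

variable {ι L : Type*} [LinearOrder L] [OrderBot L] [TopologicalSpace L] [OrderTopology L]

/-- The continuous map `x ↦ max_{I ∈ s} min_{i ∈ I} x i`; the empty set contributes `⊥`. -/
def maxMin (s : Finset (Finset ι)) : C(ι → L, L) where
  toFun x := s.sup fun I => if h : I.Nonempty then I.inf' h x else ⊥
  continuous_toFun := by
    refine Continuous.finset_sup_apply fun I _ => ?_
    split_ifs with h
    · exact Continuous.finset_inf'_apply h fun i _ => continuous_apply i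
    · exact continuous_const

lemma lt_maxMin_iff {s : Finset (Finset ι)} {x : ι → L} {a : L} :
    a < maxMin s x ↔ ∃ I ∈ s, I.Nonempty ∧ ∀ i ∈ I, a < x i := by
  refine Finset.lt_sup_iff.trans (exists_congr fun I => and_congr_right fun _ => ?_)
  split_ifs with h
  · simp [h]
  · simp [h]

end MaxMin

namespace LongRay

instance inst_s4 : OrderBot LongRay where
  bot := rayZero
  bot_le x := by
    refine not_lt.1 fun hx => ?_
    rcases Prod.Lex.lt_iff.1 hx with h | ⟨-, h⟩
    · exact not_lt_bot (α := Ordinal) h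
    · exact h.not_ge (ofLex x).2.2.1

instance inst_s4_2 : DenselyOrdered LongRay :=
  inferInstanceAs (DenselyOrdered ({o : Ordinal // o < Omega1} ×ₗ (Ico (0 : ℝ) 1)))

instance inst_s4_3 : NoMaxOrder LongRay :=
  inferInstanceAs (NoMaxOrder ({o : Ordinal // o < Omega1} ×ₗ (Ico (0 : ℝ) 1)))

instance : CountableInterFilter (atTop : Filter LongRay) :=
  countableInterFilter_atTop_of_bddAbove_range fun u => by
    let v (k : ℕ) : Ordinal := (ofLex (u k)).1
    have hv : ⨆ k, v k < Omega1 := Ordinal.iSup_lt_omega_one fun k => (ofLex (u k)).1.2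
    refine ⟨toLex (⟨Order.succ (⨆ k, v k), (Cardinal.isSuccLimit_omega 1).succ_lt hv⟩,
      ⟨0, by simp⟩), forall_mem_range.2 fun k => le_of_lt (Prod.Lex.lt_iff.2 (Or.inl ?_))⟩
    exact Order.lt_succ_of_le (Ordinal.le_iSup v k)

lemma countable_Iic_of_lt_omega1 (a : {o : Ordinal // o < Omega1}) : (Iic a).Countable := by
  have h : (Iio (Order.succ (a : Ordinal))).Countable := by
    rw [← Cardinal.le_aleph0_iff_set_countable, Cardinal.mk_Iio_ordinal, Cardinal.lift_le_aleph0,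
      ← Order.lt_succ_iff, Cardinal.succ_aleph0, ← Cardinal.lt_omega_iff_card_lt]
    exact (Cardinal.isSuccLimit_omega 1).succ_lt a.2
  refine (h.preimage Subtype.val_injective).mono fun o (ho : o ≤ a) => ?_
  exact Order.lt_succ_of_le (Subtype.coe_le_coe.2 ho)

lemma exists_orderIso_Iic_Icc (b : LongRay) : ∃ r ≥ 0, Nonempty (Iic b ≃o Icc (0 : ℝ) r) :=
  exists_orderIso_Iic_Icc_of_countable (α := {o : Ordinal // o < Omega1}) b
    (countable_Iic_of_lt_omega1 _)

instance (b : LongRay) : SecondCountableTopology (Iic b) :=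
  let ⟨_, _, ⟨e⟩⟩ := exists_orderIso_Iic_Icc b
  e.toHomeomorph.secondCountableTopology

instance (b : LongRay) : CompactSpace (Iic b) :=
  let ⟨_, _, ⟨e⟩⟩ := exists_orderIso_Iic_Icc b
  e.symm.toHomeomorph.compactSpace

instance (b : LongRay) : PreconnectedSpace (Iic b) :=
  let ⟨r, _, ⟨e⟩⟩ := exists_orderIso_Iic_Icc b
  have := isPreconnected_iff_preconnectedSpace.1 (isPreconnected_Icc (a := 0) (b := r))
  e.symm.surjective.denseRange.preconnectedSpace e.symm.toHomeomorph.continuous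

instance inst_s4_4 : CompactIccSpace LongRay :=
  ⟨fun {_ b} => (isCompact_iff_compactSpace.2 (inferInstanceAs (CompactSpace (Iic b))))
    |>.of_isClosed_subset isClosed_Icc Icc_subset_Iic_self⟩

lemma exists_retraction (b : LongRay) : ∃ (ψ : C(LongRay, ℝ)) (σ : C(ℝ, LongRay)),
    Monotone σ ∧ ∀ x ≤ b, σ (ψ x) = x := by
  obtain ⟨r, hr, ⟨e⟩⟩ := exists_orderIso_Iic_Icc b
  refine ⟨⟨fun x => e (projIic b x), ?_⟩, ⟨fun s => e.symm (projIcc 0 r hr s), ?_⟩, ?_, ?_⟩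
  · have : Continuous (projIic b) := (continuous_const.min continuous_id).subtype_mk _
    exact continuous_subtype_val.comp (e.continuous.comp this)
  · exact continuous_subtype_val.comp (e.symm.continuous.comp continuous_projIcc)
  · exact (Subtype.mono_coe _).comp (e.symm.monotone.comp (monotone_projIcc hr))
  · intro x hx
    simp [projIic_of_mem (mem_Iic.2 hx)]

lemma exists_interpolation (b : LongRay) : ∃ G : C(unitInterval × LongRay × LongRay, LongRay),
    ∀ x ≤ b, ∀ y ≤ b, G (0, x, y) = x ∧ G (1, x, y) = y ∧ ∀ t, G (t, x, y) ∈ uIcc x y := by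
  obtain ⟨ψ, σ, hσ, hσψ⟩ := exists_retraction b
  refine ⟨⟨fun p => σ (AffineMap.lineMap (ψ p.2.1) (ψ p.2.2) (p.1 : ℝ)), by fun_prop⟩,
    fun x hx y hy => ⟨by simp [hσψ x hx], by simp [hσψ y hy], fun t => ?_⟩⟩
  have ht : AffineMap.lineMap (ψ x) (ψ y) (t : ℝ) ∈ uIcc (ψ x) (ψ y) := by
    rw [← segment_eq_uIcc, segment_eq_image_lineMap]
    exact mem_image_of_mem _ t.2
  have hσt := (hσ.monotoneOn _).mapsTo_uIcc ht
  rw [hσψ x hx, hσψ y hy] at hσt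
  exact hσt

-- `level x` depends only on the set of admissible levels at `x`, hence it is locally constant
-- wherever that set is.
lemma homotopic_of_forall_notMem_uIoo {X : Type*} [TopologicalSpace X] {f g : C(X, LongRay)}
    {C : Set LongRay} (hC : ∃ᶠ c in atTop, c ∈ C) (h : ∀ c ∈ C, ∀ x, c ∉ uIoo (f x) (g x)) :
    f.Homotopic g := by
  choose G hG using exists_interpolation
  let level (x : X) : LongRay := Classical.epsilon (· ∈ {c ∈ C | max (f x) (g x) ≤ c})
  have hlevel (x : X) : f x ≤ level x ∧ g x ≤ level x := by
    obtain ⟨c, hc, hcC⟩ := frequently_atTop.1 hC (max (f x) (g x))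
    exact max_le_iff.1 (Classical.epsilon_spec (p := (· ∈ {c ∈ C | max (f x) (g x) ≤ c}))
      ⟨c, hcC, hc⟩).2
  have hGlevel (x : X) := hG (level x) (f x) (hlevel x).1 (g x) (hlevel x).2
  let H (p : unitInterval × X) : LongRay := G (level p.2) (p.1, f p.2, g p.2)
  have hH : Continuous H := by
    refine continuous_of_forall_mem_uIcc (f.continuous.comp continuous_snd)
      (g.continuous.comp continuous_snd) (fun p => (hGlevel p.2).2.2 p.1) fun p hp => ?_
    have hloc : ∀ᶠ y in 𝓝 p.2, level y = level p.2 :=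
      (eventually_sep_max_le_eq f.continuous g.continuous h hp).mono fun y hy =>
        congrArg (fun S : Set LongRay => Classical.epsilon (· ∈ S)) hy
    have hcont : Continuous fun q : unitInterval × X => G (level p.2) (q.1, f q.2, g q.2) := by
      fun_prop
    refine hcont.continuousAt.congr ?_
    filter_upwards [(continuous_snd.tendsto p).eventually hloc] with q hq
    simp only [H, hq]
  exact ⟨⟨⟨H, hH⟩, fun x => (hGlevel x).1, fun x => (hGlevel x).2.1⟩⟩

section CofinalityClass

variable {n : ℕ} {f : (Fin n → LongRay) → LongRay} {I : Finset (Fin n)}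

lemma delta_eq_range_diagPoint (I : Finset (Fin n)) (c : Fin n → LongRay) :
    Delta n I c = range (diagPoint I c) := by
  ext x
  constructor
  · rintro ⟨hI, hc⟩
    rcases I.eq_empty_or_nonempty with rfl | ⟨i, hi⟩
    · exact ⟨⊥, funext fun j => (hc j (Finset.notMem_empty j)).symm⟩
    · refine ⟨x i, funext fun j => ?_⟩
      by_cases hj : j ∈ I
      · rw [diagPoint_of_mem hj, hI i hi j hj]
      · rw [diagPoint_of_notMem hj, hc j hj]
  · rintro ⟨y, rfl⟩
    exact ⟨fun i hi j hj => by rw [diagPoint_of_mem hi, diagPoint_of_mem hj],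
      fun j hj => diagPoint_of_notMem hj c y⟩

lemma iCofinal_iff_not_bddAbove :
    ICofinal n f I ↔ ¬ BddAbove (range fun x => f (diagPoint I ⊥ x)) := by
  rw [ICofinal, delta_eq_range_diagPoint, ← range_comp]
  rfl

lemma empty_notMem_cofClass (f : (Fin n → LongRay) → LongRay) : ∅ ∉ cofClass n f := fun h =>
  iCofinal_iff_not_bddAbove.1 h ⟨f ⊥, forall_mem_range.2 fun _ => le_rfl⟩

lemma isUpperSet_cofClass (hf : Continuous f) : IsUpperSet (cofClass n f) := by
  intro I I' hII' hI
  by_contra hI'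
  obtain ⟨m, hm⟩ := exists_eventually_forall_mem_tube_le hf
    (not_not.1 (mt iCofinal_iff_not_bddAbove.2 hI')) ⊥
  obtain ⟨γ, hmγ⟩ := exists_gt m
  obtain ⟨δ, hδ⟩ := hm.exists
  obtain ⟨δ', hδδ', hδ'⟩ := ((eventually_ge_atTop δ).and
    (eventually_forall_mem_tube_ge hf (iCofinal_iff_not_bddAbove.1 hI) δ γ)).exists
  let y := diagPoint I' ⊥ δ
  have hxI : diagPoint I y δ' ∈ tube I δ δ' := by
    refine ⟨fun i hi => (diagPoint_of_mem hi _ _).ge, fun j hj => ?_⟩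
    rw [diagPoint_of_notMem hj]
    by_cases hj' : j ∈ I' <;> simp [y, diagPoint, hj']
  have hxI' : diagPoint I y δ' ∈ tube I' ⊥ δ := by
    refine ⟨fun i hi => ?_, fun j hj => ?_⟩
    · by_cases hi' : i ∈ I <;> simp [y, diagPoint, hi, hi', hδδ']
    · rw [diagPoint_of_notMem (fun h => hj (hII' h))]
      exact (diagPoint_of_notMem hj _ _).le
  exact hmγ.not_ge ((hδ' _ hxI).trans (hδ _ hxI'))

lemma iCofinal_of_homotopic {f g : C(Fin n → LongRay, LongRay)} (h : f.Homotopic g)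
    (hf : ICofinal n f I) : ICofinal n g I := by
  obtain ⟨H⟩ := h
  rw [iCofinal_iff_not_bddAbove] at hf ⊢
  refine mt (fun hg => ?_) hf
  simpa using bddAbove_range_of_preconnectedSpace
    (F := fun (t : unitInterval) x => H (t, diagPoint I ⊥ x)) (fun t => by fun_prop)
    (fun x => by fun_prop) (s := 1) (by simpa using hg) 0

lemma cofClass_eq_of_homotopic {f g : C(Fin n → LongRay, LongRay)} (h : f.Homotopic g) :
    cofClass n f = cofClass n g :=
  Set.ext fun _ => ⟨iCofinal_of_homotopic h, iCofinal_of_homotopic h.symm⟩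

/-- `α` is so large compared with `β` that in every tube where the thin directions are bounded by
`β` and the long ones start at `α`, the map `f` is at least `β` or at most `α`, according to its
cofinality class. -/
def Controls (f : (Fin n → LongRay) → LongRay) (β α : LongRay) : Prop :=
  ∀ I, ∀ x ∈ tube I β α, (ICofinal n f I → β ≤ f x) ∧ (¬ ICofinal n f I → f x ≤ α)

lemma Controls.anti {β β' α : LongRay} (hβ : β ≤ β') (h : Controls f β' α) : Controls f β α :=
  fun I x hx =>
    have hI := h I x ⟨hx.1, fun j hj => (hx.2 j hj).trans hβ⟩
    ⟨fun hf => hβ.trans (hI.1 hf), hI.2⟩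

lemma eventually_controls (hf : Continuous f) (β : LongRay) :
    ∀ᶠ α in atTop, Controls f β α := by
  refine eventually_all.2 fun I => ?_
  by_cases hI : ICofinal n f I
  · filter_upwards [eventually_forall_mem_tube_ge hf (iCofinal_iff_not_bddAbove.1 hI) β β]
      with α hα x hx
    exact ⟨fun _ => hα x hx, fun h => (h hI).elim⟩
  · obtain ⟨m, hm⟩ := exists_eventually_forall_mem_tube_le hf
      (not_not.1 (mt iCofinal_iff_not_bddAbove.2 hI)) β
    filter_upwards [hm, eventually_ge_atTop m] with α hα hmα x hx
    exact ⟨fun h => (hI h).elim, fun _ => (hα x hx).trans hmα⟩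

/-- `c` is a level of `f` if the side of `c` on which `f x` lies is determined by the cofinality
class of `f` and the set of coordinates of `x` that are at least `c`. -/
def IsLevel (f : (Fin n → LongRay) → LongRay) (c : LongRay) : Prop :=
  ∀ x : Fin n → LongRay, (ICofinal n f {i | c ≤ x i} → c ≤ f x) ∧
    (¬ ICofinal n f {i | c ≤ x i} → f x ≤ c)

lemma isLevel_of_forall_lt_controls {c : LongRay} (hc : ⊥ < c) (h : ∀ β < c, Controls f β c) :
    IsLevel f c := by
  intro x
  let β := ({i | x i < c} : Finset (Fin n)).sup x
  have hβ : β < c := (Finset.sup_lt_iff hc).2 fun i hi => (Finset.mem_filter.1 hi).2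
  have hx {γ : LongRay} (hγ : β ≤ γ) : x ∈ tube {i | c ≤ x i} γ c :=
    ⟨fun i hi => (Finset.mem_filter.1 hi).2, fun j hj =>
      (Finset.le_sup (f := x) (by simpa using hj)).trans hγ⟩
  refine ⟨fun hI => le_of_forall_lt_imp_le_of_dense fun γ hγ => ?_,
    (h β hβ _ x (hx le_rfl)).2⟩
  exact (le_max_right β γ).trans ((h _ (max_lt hβ hγ) _ x (hx (le_max_left β γ))).1 hI)

lemma frequently_isLevel_and_isLevel {g : (Fin n → LongRay) → LongRay} (hf : Continuous f)
    (hg : Continuous g) : ∃ᶠ c in atTop, IsLevel f c ∧ IsLevel g c := by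
  have hfg : ∃ᶠ c in atTop, ∀ β < c, Controls f β c ∧ Controls g β c :=
    frequently_atTop_forall_lt (fun β => (eventually_controls hf β).and (eventually_controls hg β))
      fun _ _ _ hβ h => ⟨h.1.anti hβ, h.2.anti hβ⟩
  refine (hfg.and_eventually (eventually_gt_atTop ⊥)).mono fun c ⟨h, hc⟩ => ?_
  exact ⟨isLevel_of_forall_lt_controls hc fun β hβ => (h β hβ).1,
    isLevel_of_forall_lt_controls hc fun β hβ => (h β hβ).2⟩

lemma homotopic_of_cofClass_eq {f g : C(Fin n → LongRay, LongRay)}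
    (h : cofClass n f = cofClass n g) : f.Homotopic g := by
  refine homotopic_of_forall_notMem_uIoo
    (frequently_isLevel_and_isLevel f.continuous g.continuous) fun c ⟨hf, hg⟩ x hc => ?_
  have hI : ICofinal n f {i | c ≤ x i} ↔ ICofinal n g {i | c ≤ x i} := Set.ext_iff.1 h _
  by_cases hfI : ICofinal n f {i | c ≤ x i}
  · exact (le_min ((hf x).1 hfI) ((hg x).1 (hI.1 hfI))).not_gt hc.1
  · exact (max_le ((hf x).2 hfI) ((hg x).2 (mt hI.2 hfI))).not_gt hc.2

lemma iCofinal_maxMin {s : Finset (Finset (Fin n))} :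
    ICofinal n (maxMin s) I ↔ ∃ J ∈ s, J.Nonempty ∧ J ⊆ I := by
  rw [iCofinal_iff_not_bddAbove, not_bddAbove_iff]
  simp only [exists_range_iff, lt_maxMin_iff]
  constructor
  · intro h
    obtain ⟨x, J, hJ, hne, hx⟩ := h ⊥
    refine ⟨J, hJ, hne, fun i hi => by_contra fun hiI => (hx i hi).ne' ?_⟩
    exact diagPoint_of_notMem hiI _ _
  · rintro ⟨J, hJ, hne, hJI⟩ a
    obtain ⟨x, hx⟩ := exists_gt a
    exact ⟨x, J, hJ, hne, fun i hi => (diagPoint_of_mem (hJI hi) _ _).symm ▸ hx⟩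

lemma cofClass_maxMin {A : Set (Finset (Fin n))} (hA : ∅ ∉ A) :
    cofClass n (maxMin A.toFinite.toFinset) = upperClosure A := by
  ext I
  refine iCofinal_maxMin.trans (exists_congr fun J => ?_)
  rw [Finite.mem_toFinset]
  exact and_congr_right fun hJ =>
    and_iff_right (Finset.nonempty_iff_ne_empty.2 (ne_of_mem_of_not_mem hJ hA))

end CofinalityClass

end LongRay

/-- the free homotopy classes `[𝖱ⁿ, 𝖱]` are in bijection with the
antichains of `𝒫(N) \ {∅}` ordered by inclusion. -/
theorem homotopy_classes_equiv_antichains (n : ℕ) :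
    Nonempty (Quot (fun f g : C(Fin n → LongRay, LongRay) => f.Homotopic g) ≃
      {A : Set (Finset (Fin n)) // IsAntichain (· ⊆ ·) A ∧ ∅ ∉ A}) := by
  let Φ : Quot (fun f g : C(Fin n → LongRay, LongRay) => f.Homotopic g) →
      {A : Set (Finset (Fin n)) // IsAntichain (· ⊆ ·) A ∧ ∅ ∉ A} :=
    Quot.lift (fun f => ⟨{I | Minimal (· ∈ cofClass n f) I}, setOfPred_minimal_antichain _,
      fun h => LongRay.empty_notMem_cofClass f h.prop⟩) fun f g hfg => Subtype.ext <| by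
        simp only [LongRay.cofClass_eq_of_homotopic hfg]
  refine ⟨Equiv.ofBijective Φ ⟨?_, ?_⟩⟩
  · rintro ⟨f⟩ ⟨g⟩ hfg
    refine Quot.sound (LongRay.homotopic_of_cofClass_eq ?_)
    rw [← coe_upperClosure_setOf_minimal (LongRay.isUpperSet_cofClass f.continuous),
      ← coe_upperClosure_setOf_minimal (LongRay.isUpperSet_cofClass g.continuous)]
    exact congrArg (fun A => (upperClosure A.1 : Set (Finset (Fin n)))) hfg
  · rintro ⟨A, hA, hA0⟩
    refine ⟨Quot.mk _ (maxMin A.toFinite.toFinset), Subtype.ext <| Set.ext fun I => ?_⟩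
    change Minimal (· ∈ cofClass n (maxMin A.toFinite.toFinset)) I ↔ I ∈ A
    rw [LongRay.cofClass_maxMin hA0]
    exact hA.minimal_mem_upperClosure_iff_mem
end
end
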